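/- Lemma 1, point 2 (every parameter is trained by the task for at least Δ epochs): let Δ > 0 be the number of training epochs between two consecutive partition updates, and suppose the partition used at training epoch e is A (e / Δ) (integer division). Then for every parameter i : Fin S, the number of epochs e < Δ·(S − k + 1) at which i belongs to the partition in use (i.e. i ∈ A (e / Δ)) is at least Δ. -/

import Mathlib

/-!
Every update brings in a parameter that was never visited before, so the visited set gains at
least one element per step and exhausts all `S` parameters after `S - k` steps. Hence each
parameter lies in some `A c` with `c ≤ S - k`, and `e / Δ = c` for exactly `Δ` epochs `e`, all of
them below `Δ * (S - k + 1)`.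
-/

open Finset

section Visited

variable {α : Type*} [DecidableEq α] {A : ℕ → Finset α}

theorem card_add_le_card_biUnion_range_of_not_subset {n : ℕ}
    (hnew : ∀ c < n, ¬ A (c + 1) ⊆ (range (c + 1)).biUnion A) :
    #(A 0) + n ≤ #((range (n + 1)).biUnion A) := by
  induction n with
  | zero => simp
  | succ n ih =>
    have hssubset : (range (n + 1)).biUnion A ⊂ (range (n + 2)).biUnion A := by
      rw [range_add_one (n := n + 1), biUnion_insert]
      exact right_lt_sup.mpr (hnew n n.lt_succ_self)
    calc #(A 0) + (n + 1)
        ≤ #((range (n + 1)).biUnion A) + 1 :=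
          Nat.succ_le_succ (ih fun c hc ↦ hnew c (hc.trans n.lt_succ_self))
      _ ≤ #((range (n + 2)).biUnion A) := card_lt_card hssubset

theorem biUnion_range_eq_univ_of_not_subset [Fintype α]
    (hnew : ∀ c < Fintype.card α - #(A 0), ¬ A (c + 1) ⊆ (range (c + 1)).biUnion A) :
    (range (Fintype.card α - #(A 0) + 1)).biUnion A = univ := by
  rw [← card_eq_iff_eq_univ]
  refine le_antisymm (card_le_univ _) ?_
  calc Fintype.card α = #(A 0) + (Fintype.card α - #(A 0)) :=
        (Nat.add_sub_of_le (card_le_univ _)).symm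
    _ ≤ #((range (Fintype.card α - #(A 0) + 1)).biUnion A) :=
        card_add_le_card_biUnion_range_of_not_subset hnew

end Visited

theorem card_filter_range_mul_div (d n : ℕ) (p : ℕ → Prop) [DecidablePred p] :
    #{e ∈ range (d * n) | p (e / d)} = d * #{c ∈ range n | p c} := by
  simp only [← Nat.count_eq_card_filter_range]
  induction n with
  | zero => simp
  | succ n ih =>
    have hblock : Nat.count (fun j ↦ p ((d * n + j) / d)) d = if p n then d else 0 := by
      have hdiv : ∀ j ∈ range d, (d * n + j) / d = n := fun j hj ↦ by
        have hjd : j < d := mem_range.mp hj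
        rw [Nat.mul_add_div (Nat.zero_lt_of_lt hjd), Nat.div_eq_of_lt hjd, add_zero]
      rw [Nat.count_eq_card_filter_range, filter_congr fun j hj ↦ by rw [hdiv j hj], filter_const]
      split_ifs <;> simp
    rw [mul_add_one, Nat.count_add, ih, hblock, Nat.count_succ, mul_add, mul_ite, mul_one, mul_zero]

theorem maximum_roaming_each_param_trained_delta_epochs_general
    {α : Type*} [Fintype α] [DecidableEq α] (A : ℕ → Finset α)
    (hnew : ∀ c < Fintype.card α - #(A 0), ¬ A (c + 1) ⊆ (range (c + 1)).biUnion A)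
    (Δ : ℕ) (i : α) :
    Δ ≤ #{e ∈ range (Δ * (Fintype.card α - #(A 0) + 1)) | i ∈ A (e / Δ)} := by
  obtain ⟨c, hc, hic⟩ : ∃ c ∈ range (Fintype.card α - #(A 0) + 1), i ∈ A c :=
    mem_biUnion.mp (biUnion_range_eq_univ_of_not_subset hnew ▸ mem_univ i)
  rw [card_filter_range_mul_div Δ _ fun c ↦ i ∈ A c]
  exact Nat.le_mul_of_pos_right Δ (card_pos.mpr ⟨c, mem_filter.mpr ⟨hc, hic⟩⟩)

/-- Lemma 1, point 2: with `Δ > 0` training epochs between two consecutive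
partition updates (the partition used at epoch `e` being `A (e / Δ)`),
every parameter `i` belongs to the partition in use for at least `Δ` of the
epochs `e < Δ·(S − k + 1)`. -/
theorem maximum_roaming_each_param_trained_delta_epochs
    (S k : ℕ) (hS : 0 < S) (hk : 0 < k) (hkS : k ≤ S)
    (A B : ℕ → Finset (Fin S))
    (hB : ∀ c, B c = (Finset.range (c + 1)).biUnion A)
    (hA0 : (A 0).card = k)
    (hupd : ∀ c, c < S - k →
      ∃ im ∈ A c, ∃ ip ∉ B c, A (c + 1) = insert ip ((A c).erase im))
    (hfreeze : ∀ c, S - k ≤ c → A (c + 1) = A c)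
    (Δ : ℕ) (hΔ : 0 < Δ) :
    ∀ i : Fin S,
      Δ ≤ ((Finset.range (Δ * (S - k + 1))).filter (fun e => i ∈ A (e / Δ))).card := by
  have hnew : ∀ c < S - k, ¬ A (c + 1) ⊆ (range (c + 1)).biUnion A := by
    intro c hc hsub
    obtain ⟨_, _, ip, hip, hA⟩ := hupd c hc
    exact hip (hB c ▸ hsub (hA ▸ mem_insert_self _ _))
  subst hA0
  simpa only [Fintype.card_fin] using
    maximum_roaming_each_param_trained_delta_epochs_general A (by simpa only [Fintype.card_fin]) Δ
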